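/- Let p ≥ 1 and let ν be a probability measure on 𝕋 with a density (still denoted ν) with respect to λ satisfying |ν(x)−ν(y)| ≤ A d(x,y)^a for all x,y, with a ∈ (0,1], A > 0. Define ã(p) := 1 if p = 1 or p ≥ 3/2, and ã(p) := 2(p−1) if p ∈ (1, 3/2). Then there exist a constant c₃ > 0, depending only on p and A, and a constant σ̃ ∈ (0, 1/2), depending only on p, such that for every α > 0 and β ≥ 1 with αβ² ≤ σ̃, and for every f ∈ C²(𝕋), ∫_𝕋 L_{α,β}[f − 1]·(f − 1) dμ_β ≤ −(1/2 − c₃ α^{ã(p)} β³) ∫_𝕋 (f')² dμ_β + c₃ α^{ã(p)} β³ ∫_𝕋 (f − 1)² dμ_β. -/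

import Mathlib

open MeasureTheory Real Set Filter

noncomputable section

instance : Fact (0 < 2 * π) := ⟨Real.two_pi_pos⟩

/-- The circle `𝕋 = ℝ/(2πℤ)`. -/
abbrev 𝕋 : Type := AddCircle (2 * π)

/-- The normalized Haar probability measure `λ` on the circle. -/
def lam : Measure 𝕋 := (ENNReal.ofReal (2 * π))⁻¹ • volume

/-- The representative of a point of the circle in `(-π, π]`. -/
def rep (z : 𝕋) : ℝ := ((AddCircle.equivIoc (2 * π) (-π) z : Set.Ioc (-π) (-π + 2 * π)) : ℝ)

/-- `σ(x,y) = +1` if the representative of `y - x` lies in `[0, π]`, `-1` otherwise. -/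
def sgn (x y : 𝕋) : ℝ := if 0 ≤ rep (y - x) then 1 else -1

/-- The potential `U_p(x) = ∫ d(x,y)^p ν(dy)`. -/
def Up (p : ℝ) (ν : Measure 𝕋) (x : 𝕋) : ℝ := ∫ y, dist x y ^ p ∂ν

/-- The normalizing constant `Z_β = ∫ exp(-β U_p) dλ`. -/
def Zp (p : ℝ) (ν : Measure 𝕋) (β : ℝ) : ℝ := ∫ x, Real.exp (-β * Up p ν x) ∂lam

/-- The Gibbs measure `μ_β` with density `exp(-β U_p)/Z_β` w.r.t. `λ`. -/
def gibbsp (p : ℝ) (ν : Measure 𝕋) (β : ℝ) : Measure 𝕋 :=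
  lam.withDensity fun x => ENNReal.ofReal (Real.exp (-β * Up p ν x) / Zp p ν β)

/-- The generator, acting on (the periodic lift) `φ` of a `C²` function on `𝕋`:
`L_{α,β}φ(x) = ½ φ''(x) + α⁻¹ ∫ [φ(x + (p/2)αβ d(x,y)^{p-1} σ(x,y)) - φ(x)] ν(dy)`. -/
def genp (p : ℝ) (ν : Measure 𝕋) (α β : ℝ) (φ : ℝ → ℝ) (z : 𝕋) : ℝ :=
  (1 / 2) * deriv (deriv φ) (rep z)
    + α⁻¹ * ∫ y, (φ (rep z + p / 2 * α * β * dist z y ^ (p - 1) * sgn z y) - φ (rep z)) ∂ν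

/-- The exponent `ã(p)`: `1` if `p = 1` or `p ≥ 3/2`, and `2(p-1)` if `p ∈ (1, 3/2)`. -/
def ta (p : ℝ) : ℝ := if p = 1 ∨ 3 / 2 ≤ p then 1 else 2 * (p - 1)

lemma swap_aux (a b c d : ℝ) (hab : a ≤ b) (hcd : c ≤ d) (k : ℝ → ℝ)
    (hk : IntervalIntegrable k volume c d) (Φ : ℝ → ℝ → ℝ) (hΦ : Continuous (Function.uncurry Φ)) :
    IntervalIntegrable (fun y => ∫ w in c..d, k w * Φ y w) volume a b ∧
    (∫ y in a..b, ∫ w in c..d, k w * Φ y w) = ∫ w in c..d, k w * ∫ y in a..b, Φ y w := by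
  have hint : Integrable (Function.uncurry fun y w => k w * Φ y w)
      ((volume.restrict (Ioc a b)).prod (volume.restrict (Ioc c d))) := by
    have h1 : Integrable (fun z : ℝ × ℝ => k z.2)
        ((volume.restrict (Ioc a b)).prod (volume.restrict (Ioc c d))) :=
      Integrable.comp_snd ((intervalIntegrable_iff_integrableOn_Ioc_of_le hcd).1 hk) _
    obtain ⟨C, hC⟩ := (isCompact_Icc.prod isCompact_Icc : IsCompact (Icc a b ×ˢ Icc c d)).exists_bound_of_continuousOn
      hΦ.continuousOn
    have h2 := h1.bdd_mul (f := Function.uncurry Φ) (c := C) hΦ.aestronglyMeasurable (by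
      rw [Measure.prod_restrict]
      filter_upwards [ae_restrict_mem (measurableSet_Ioc.prod measurableSet_Ioc)] with z hz
      exact hC z ⟨Ioc_subset_Icc_self hz.1, Ioc_subset_Icc_self hz.2⟩)
    refine h2.congr (Eventually.of_forall ?_)
    intro z
    simp [Function.uncurry, mul_comm]
  constructor
  · rw [intervalIntegrable_iff_integrableOn_Ioc_of_le hab]
    simp only [intervalIntegral.integral_of_le hcd]
    exact hint.integral_prod_left
  · have := integral_integral_swap hint
    simp only [intervalIntegral.integral_of_le hcd, intervalIntegral.integral_of_le hab]
    rw [this]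
    simp only [integral_const_mul]

lemma per_shift (N : ℝ → ℝ) (hN : Function.Periodic N (2 * π)) (v : ℝ) :
    (∫ y in (-π)..π, N (y + v)) = ∫ y in (-π)..π, N y := by
  rw [intervalIntegral.integral_comp_add_right]
  have := hN.intervalIntegral_add_eq (-π + v) (-π)
  rw [show -π + v + 2 * π = π + v by ring, show -π + 2 * π = π by ring] at this
  exact this

def TT (N : ℝ → ℝ) (ε x s : ℝ) : ℝ := ∫ r in (0:ℝ)..1, (N (x + ε * (r * s)) + N x)

lemma TT_cont (N : ℝ → ℝ) (hN : Continuous N) (ε : ℝ) :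
    Continuous (fun z : ℝ × ℝ => TT N ε z.1 z.2) := by
  unfold TT
  apply intervalIntegral.continuous_parametric_intervalIntegral_of_continuous'
  fun_prop

lemma TT_int (N : ℝ → ℝ) (hN : Continuous N) (hper : Function.Periodic N (2 * π)) (ε u s : ℝ) :
    (∫ y in (-π)..π, TT N ε (y + u) s) = 2 * ∫ y in (-π)..π, N y := by
  have h := (swap_aux (-π) π 0 1 (by linarith [pi_pos]) zero_le_one (fun _ => 1)
    intervalIntegrable_const (fun y r => N (y + u + ε * (r * s)) + N (y + u)) (by fun_prop)).2
  simp only [one_mul] at h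
  unfold TT
  rw [h]
  have : ∀ r : ℝ, (∫ y in (-π)..π, (N (y + u + ε * (r * s)) + N (y + u))) =
      2 * ∫ y in (-π)..π, N y := by
    intro r
    rw [intervalIntegral.integral_add
      (Continuous.intervalIntegrable (by fun_prop) _ _)
      (Continuous.intervalIntegrable (by fun_prop) _ _)]
    simp only [add_assoc]
    rw [per_shift N hper, per_shift N hper]
    ring
  simp [this]

lemma inc_aux (h h' : ℝ → ℝ) (hd : ∀ x, HasDerivAt h (h' x) x) (hc : Continuous h')
    (ε : ℝ) (hε : |ε| = 1) (x s t : ℝ) (hs : 0 ≤ s) (ht : 0 ≤ t) (ht1 : t ≤ 1) :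
    |h (x + ε * (t * s)) - h x| ≤ s * ∫ r in (0:ℝ)..1, |h' (x + ε * (r * s))| := by
  have hci : ∀ a b : ℝ, IntervalIntegrable (fun r => |h' (x + ε * (r * s))|) volume a b :=
    fun a b => Continuous.intervalIntegrable (by fun_prop) _ _
  have e : (∫ r in (0:ℝ)..t, h' (x + ε * (r * s)) * (ε * s)) = h (x + ε * (t * s)) - h x := by
    have := intervalIntegral.integral_eq_sub_of_hasDerivAt (a := 0) (b := t)
      (f := fun r => h (x + ε * (r * s))) (f' := fun r => h' (x + ε * (r * s)) * (ε * s)) ?_ ?_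
    · simpa using this
    · intro r _
      have h1 : HasDerivAt (fun r : ℝ => x + ε * (r * s)) (ε * s) r := by
        simpa using (((hasDerivAt_id r).mul_const s).const_mul ε).const_add x
      exact (hd _).comp r h1
    · exact Continuous.intervalIntegrable (by fun_prop) _ _
  rw [← e]
  calc _ ≤ ∫ r in (0:ℝ)..t, ‖h' (x + ε * (r * s)) * (ε * s)‖ :=
        intervalIntegral.norm_integral_le_integral_norm ht
    _ = s * ∫ r in (0:ℝ)..t, |h' (x + ε * (r * s))| := by
        rw [← intervalIntegral.integral_const_mul]
        congr 1; ext r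
        rw [norm_mul, norm_mul, Real.norm_eq_abs, Real.norm_eq_abs, Real.norm_eq_abs, hε,
          abs_of_nonneg hs]
        ring
    _ ≤ _ := by
        gcongr
        apply intervalIntegral.integral_mono_interval le_rfl ht ht1 _ (hci _ _)
        exact Eventually.of_forall fun r => abs_nonneg _

lemma Q_aux (P h h' : ℝ → ℝ) (hP : ∀ x, HasDerivAt P (h x) x)
    (hd : ∀ x, HasDerivAt h (h' x) x) (hc : Continuous h')
    (ε : ℝ) (hε : |ε| = 1) (x s : ℝ) (hs : 0 ≤ s) :
    |P (x + ε * s) - P x - ε * s * h x| ≤ s * (s * ∫ r in (0:ℝ)..1, |h' (x + ε * (r * s))|) := by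
  have hhc : Continuous h := continuous_iff_continuousAt.2 fun x => (hd x).continuousAt
  have e : (∫ t in (0:ℝ)..1, (h (x + ε * (t * s)) - h x) * (ε * s)) =
      P (x + ε * s) - P x - ε * s * h x := by
    have := intervalIntegral.integral_eq_sub_of_hasDerivAt (a := 0) (b := 1)
      (f := fun r => P (x + ε * (r * s)) - r * (h x * (ε * s)))
      (f' := fun r => (h (x + ε * (r * s)) - h x) * (ε * s)) ?_ ?_
    · rw [this]; simp; ring
    · intro r _
      have h1 : HasDerivAt (fun r : ℝ => x + ε * (r * s)) (ε * s) r := by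
        simpa using (((hasDerivAt_id r).mul_const s).const_mul ε).const_add x
      have h2 := ((hP _).comp r h1).sub ((hasDerivAt_id r).mul_const (h x * (ε * s)))
      refine h2.congr_deriv ?_
      simp; ring
    · exact Continuous.intervalIntegrable (by fun_prop) _ _
  rw [← e]
  have := intervalIntegral.norm_integral_le_of_norm_le_const (a := 0) (b := 1)
    (f := fun t => (h (x + ε * (t * s)) - h x) * (ε * s))
    (C := s * (s * ∫ r in (0:ℝ)..1, |h' (x + ε * (r * s))|)) ?_
  · simpa using this
  · intro t ht
    rw [uIoc_of_le zero_le_one] at ht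
    rw [norm_mul, norm_mul, Real.norm_eq_abs, Real.norm_eq_abs, Real.norm_eq_abs, hε,
          abs_of_nonneg hs]
    have := inc_aux h h' hd hc ε hε x s t hs ht.1.le ht.2
    nlinarith

lemma wt_aux (h' N : ℝ → ℝ) (hc : Continuous h') (hN : Continuous N) (ε x s b R : ℝ)
    (H : ∀ r ∈ Icc (0:ℝ) 1, |h' (x + ε * (r * s))| * b ≤ R * (N (x + ε * (r * s)) + N x)) :
    (∫ r in (0:ℝ)..1, |h' (x + ε * (r * s))|) * b ≤ R * TT N ε x s := by
  unfold TT
  rw [← intervalIntegral.integral_mul_const, ← intervalIntegral.integral_const_mul]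
  apply intervalIntegral.integral_mono_on zero_le_one
    (Continuous.intervalIntegrable (by fun_prop) _ _)
    (Continuous.intervalIntegrable (by fun_prop) _ _) H

lemma sig_int (p c : ℝ) (hp : 1 ≤ p) :
    IntervalIntegrable (fun w : ℝ => c * ((p - 1) * w ^ (p - 2))) volume 0 π := by
  rcases eq_or_lt_of_le hp with rfl | h
  · simp
  · exact ((intervalIntegral.intervalIntegrable_rpow' (by linarith)).const_mul _).const_mul _

lemma sig_deriv (p c w : ℝ) (hw : 0 < w) :
    HasDerivAt (fun w : ℝ => c * w ^ (p - 1)) (c * ((p - 1) * w ^ (p - 2))) w := by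
  have := (Real.hasDerivAt_rpow_const (x := w) (p := p - 1) (Or.inl hw.ne')).const_mul c
  rwa [show p - 1 - 1 = p - 2 by ring] at this

lemma sig_cont (p c : ℝ) (hp : 1 ≤ p) : Continuous (fun w : ℝ => c * w ^ (p - 1)) :=
  continuous_const.mul (Real.continuous_rpow_const (by linarith))

lemma per_y (p c R B : ℝ) (hp : 1 ≤ p) (hc0 : 0 ≤ c) (hR : 1 ≤ R) (hB : 1 ≤ B)
    (h h' m m' : ℝ → ℝ) (hd : ∀ x, HasDerivAt h (h' x) x) (hc : Continuous h')
    (hm : ∀ x, HasDerivAt m (m' x) x) (hmc : Continuous m') (hm0 : ∀ x, 0 ≤ m x)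
    (hmB : ∀ x, |m' x| ≤ B * m x)
    (hmR : ∀ x v, |v| ≤ c * π ^ (p - 1) → m x ≤ R * m (x + v))
    (ε : ℝ) (hε : |ε| = 1) (y : ℝ) :
    |∫ w in (0:ℝ)..π, (h (y - ε * w + ε * (c * w ^ (p - 1))) - h (y - ε * w)
        - ε * (c * w ^ (p - 1)) * h' (y - ε * w)) * (h (y - ε * w) * m (y - ε * w))| ≤
      R * (c * π ^ (p - 1)) ^ 2 *
        (TT (fun x => (h' x ^ 2 + h x ^ 2) * m x) ε (y - ε * π) (c * π ^ (p - 1))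
          + TT (fun x => (h' x ^ 2 + h x ^ 2) * m x) ε y (c * 0 ^ (p - 1)))
      + ∫ w in (0:ℝ)..π, (B * R * (c * w ^ (p - 1)) ^ 2
          + R * ((c * w ^ (p - 1)) * (c * ((p - 1) * w ^ (p - 2))))) *
            TT (fun x => (h' x ^ 2 + h x ^ 2) * m x) ε (y - ε * w) (c * w ^ (p - 1)) := by
  have hhc : Continuous h := continuous_iff_continuousAt.2 fun x => (hd x).continuousAt
  have hmcc : Continuous m := continuous_iff_continuousAt.2 fun x => (hm x).continuousAt
  have hε2 : ε * ε = 1 := by rw [← abs_mul_abs_self, hε]; norm_num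
  obtain ⟨P, hP⟩ : ∃ P : ℝ → ℝ, ∀ x, HasDerivAt P (h x) x :=
    ⟨fun x => ∫ t in (0:ℝ)..x, h t, fun x => hhc.integral_hasStrictDerivAt 0 x |>.hasDerivAt⟩
  have hPc : Continuous P := continuous_iff_continuousAt.2 fun x => (hP x).continuousAt
  set N : ℝ → ℝ := fun x => (h' x ^ 2 + h x ^ 2) * m x with hN
  have hNc : Continuous N := by fun_prop
  have hTc := TT_cont N hNc ε
  set σ : ℝ → ℝ := fun w => c * w ^ (p - 1) with hσ
  set σ' : ℝ → ℝ := fun w => c * ((p - 1) * w ^ (p - 2)) with hσ'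
  have hσc : Continuous σ := sig_cont p c hp
  have hσd : ∀ w, 0 < w → HasDerivAt σ (σ' w) w := fun w hw => sig_deriv p c w hw
  have hσi : IntervalIntegrable σ' volume 0 π := sig_int p c hp
  have hσ0 : ∀ w, 0 ≤ w → 0 ≤ σ w := fun w hw => by positivity
  have hσ'0 : ∀ w, 0 ≤ w → 0 ≤ σ' w := fun w hw => by
    have : 0 ≤ p - 1 := by linarith
    positivity
  have hσS : ∀ w, 0 ≤ w → w ≤ π → σ w ≤ σ π := fun w h0 h1 => by
    have : 0 ≤ p - 1 := by linarith
    simp only [hσ]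
    gcongr
  change |∫ w in (0:ℝ)..π, (h (y - ε * w + ε * σ w) - h (y - ε * w)
        - ε * σ w * h' (y - ε * w)) * (h (y - ε * w) * m (y - ε * w))| ≤
      R * (σ π) ^ 2 * (TT N ε (y - ε * π) (σ π) + TT N ε y (σ 0))
      + ∫ w in (0:ℝ)..π, (B * R * (σ w) ^ 2 + R * (σ w * σ' w)) * TT N ε (y - ε * w) (σ w)
  -- pointwise estimates
  have hshift : ∀ w, 0 ≤ w → w ≤ π → ∀ r ∈ Icc (0:ℝ) 1, |ε * (r * σ w)| ≤ σ π := by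
    intro w h0 h1 r hr
    rw [abs_mul, hε, one_mul, abs_of_nonneg (mul_nonneg hr.1 (hσ0 w h0))]
    have := hσS w h0 h1
    have := hσ0 w h0
    nlinarith [hr.2]
  have am : ∀ a b u v : ℝ, 0 ≤ u → 0 ≤ v → u ≤ R * v → |a| * |b| * u ≤ (R * (a ^ 2 * v) + b ^ 2 * u) / 2 := by
    intro a b u v hu hv huv
    have h1 : |a| * |b| ≤ (a ^ 2 + b ^ 2) / 2 := by
      have := sq_nonneg (|a| - |b|)
      rw [sub_sq, sq_abs, sq_abs] at this
      linarith
    nlinarith [mul_le_mul_of_nonneg_right h1 hu, mul_le_mul_of_nonneg_left huv (sq_nonneg a)]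
  have e1 : ∀ x w, 0 ≤ w → w ≤ π →
      (∫ r in (0:ℝ)..1, |h' (x + ε * (r * σ w))|) * |h x * m x| ≤ R * TT N ε x (σ w) := by
    intro x w h0 h1
    apply wt_aux h' N hc hNc
    intro r hr
    have := am (h' (x + ε * (r * σ w))) (h x) (m x) (m (x + ε * (r * σ w))) (hm0 _) (hm0 _)
      (hmR _ _ (hshift w h0 h1 r hr))
    rw [abs_mul, abs_of_nonneg (hm0 x), ← mul_assoc]
    refine this.trans ?_
    simp only [hN]
    have q1 := mul_nonneg (sq_nonneg (h' (x + ε * (r * σ w)))) (hm0 (x + ε * (r * σ w)))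
    have q2 := mul_nonneg (sq_nonneg (h (x + ε * (r * σ w)))) (hm0 (x + ε * (r * σ w)))
    have q3 := mul_nonneg (sq_nonneg (h' x)) (hm0 x)
    have q4 := mul_nonneg (sq_nonneg (h x)) (hm0 x)
    nlinarith [mul_nonneg (by linarith : 0 ≤ R) q1, mul_nonneg (by linarith : 0 ≤ R) q2,
      mul_nonneg (by linarith : 0 ≤ R) q3, mul_nonneg (by linarith : 0 ≤ R - 1) q4]
  have e2 : ∀ x w, 0 ≤ w → w ≤ π →
      (∫ r in (0:ℝ)..1, |h' (x + ε * (r * σ w))|) * |h' x * m x + h x * m' x|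
        ≤ (B * R) * TT N ε x (σ w) := by
    intro x w h0 h1
    apply wt_aux h' N hc hNc
    intro r hr
    have hr' := hmR x _ (hshift w h0 h1 r hr)
    have a1 := am (h' (x + ε * (r * σ w))) (h x) (m x) (m (x + ε * (r * σ w))) (hm0 _) (hm0 _) hr'
    have a2 := am (h' (x + ε * (r * σ w))) (h' x) (m x) (m (x + ε * (r * σ w))) (hm0 _) (hm0 _) hr'
    have b1 : |h' x * m x + h x * m' x| ≤ B * ((|h' x| + |h x|) * m x) := by
      refine (abs_add_le _ _).trans ?_
      rw [abs_mul, abs_mul, abs_of_nonneg (hm0 x)]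
      have := mul_le_mul_of_nonneg_left (hmB x) (abs_nonneg (h x))
      have := mul_nonneg (by linarith : 0 ≤ B - 1) (mul_nonneg (abs_nonneg (h' x)) (hm0 x))
      nlinarith
    have q1 := mul_nonneg (sq_nonneg (h' (x + ε * (r * σ w)))) (hm0 (x + ε * (r * σ w)))
    have q2 := mul_nonneg (sq_nonneg (h (x + ε * (r * σ w)))) (hm0 (x + ε * (r * σ w)))
    have q3 := mul_nonneg (sq_nonneg (h' x)) (hm0 x)
    have q4 := mul_nonneg (sq_nonneg (h x)) (hm0 x)
    calc _ ≤ |h' (x + ε * (r * σ w))| * (B * ((|h' x| + |h x|) * m x)) := by gcongr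
      _ = B * (|h' (x + ε * (r * σ w))| * |h x| * m x + |h' (x + ε * (r * σ w))| * |h' x| * m x) := by ring
      _ ≤ B * (R * (N (x + ε * (r * σ w)) + N x)) := by
        gcongr
        simp only [hN]
        nlinarith [mul_nonneg (by linarith : 0 ≤ R) q1, mul_nonneg (by linarith : 0 ≤ R) q2,
          mul_nonneg (by linarith : 0 ≤ R - 1) q3, mul_nonneg (by linarith : 0 ≤ R - 1) q4]
      _ = _ := by ring
  have hQ : ∀ x w, 0 ≤ w → |P (x + ε * σ w) - P x - ε * σ w * h x| ≤
      σ w * (σ w * ∫ r in (0:ℝ)..1, |h' (x + ε * (r * σ w))|) := fun x w h0 =>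
    Q_aux P h h' hP hd hc ε hε x (σ w) (hσ0 w h0)
  have hI : ∀ x w, 0 ≤ w → |h (x + ε * σ w) - h x| ≤
      σ w * ∫ r in (0:ℝ)..1, |h' (x + ε * (r * σ w))| := fun x w h0 => by
    simpa using inc_aux h h' hd hc ε hε x (σ w) 1 (hσ0 w h0) zero_le_one le_rfl
  have hQF : ∀ x w, 0 ≤ w → w ≤ π →
      |(P (x + ε * σ w) - P x - ε * σ w * h x) * (h x * m x)| ≤ R * σ w ^ 2 * TT N ε x (σ w) := by
    intro x w h0 h1
    rw [abs_mul]
    calc _ ≤ σ w * (σ w * ∫ r in (0:ℝ)..1, |h' (x + ε * (r * σ w))|) * |h x * m x| := by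
          gcongr; exact hQ x w h0
      _ = σ w * σ w * ((∫ r in (0:ℝ)..1, |h' (x + ε * (r * σ w))|) * |h x * m x|) := by ring
      _ ≤ σ w * σ w * (R * TT N ε x (σ w)) :=
          mul_le_mul_of_nonneg_left (e1 x w h0 h1) (mul_self_nonneg _)
      _ = _ := by ring
  have hQF' : ∀ x w, 0 ≤ w → w ≤ π →
      |(P (x + ε * σ w) - P x - ε * σ w * h x) * (h' x * m x + h x * m' x)|
        ≤ B * R * σ w ^ 2 * TT N ε x (σ w) := by
    intro x w h0 h1
    rw [abs_mul]
    calc _ ≤ σ w * (σ w * ∫ r in (0:ℝ)..1, |h' (x + ε * (r * σ w))|) * |h' x * m x + h x * m' x| := by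
          gcongr; exact hQ x w h0
      _ = σ w * σ w * ((∫ r in (0:ℝ)..1, |h' (x + ε * (r * σ w))|) * |h' x * m x + h x * m' x|) := by ring
      _ ≤ σ w * σ w * (B * R * TT N ε x (σ w)) :=
          mul_le_mul_of_nonneg_left (e2 x w h0 h1) (mul_self_nonneg _)
      _ = _ := by ring
  have hIF : ∀ x w, 0 ≤ w → w ≤ π →
      |σ' w * ((h (x + ε * σ w) - h x) * (h x * m x))| ≤ R * (σ w * σ' w) * TT N ε x (σ w) := by
    intro x w h0 h1
    rw [abs_mul (σ' w), abs_mul _ (h x * m x), abs_of_nonneg (hσ'0 w h0)]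
    have := hσ'0 w h0
    have := hσ0 w h0
    calc _ ≤ σ' w * ((σ w * ∫ r in (0:ℝ)..1, |h' (x + ε * (r * σ w))|) * |h x * m x|) := by
          gcongr; exact hI x w h0
      _ = σ' w * σ w * ((∫ r in (0:ℝ)..1, |h' (x + ε * (r * σ w))|) * |h x * m x|) := by ring
      _ ≤ σ' w * σ w * (R * TT N ε x (σ w)) :=
          mul_le_mul_of_nonneg_left (e1 x w h0 h1) (by positivity)
      _ = _ := by ring
  -- integration by parts
  set D : ℝ → ℝ := fun w => (h (y - ε * w + ε * σ w) - h (y - ε * w)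
        - ε * σ w * h' (y - ε * w)) * (h (y - ε * w) * m (y - ε * w)) with hD
  set q : ℝ → ℝ := fun w => (P (y - ε * w + ε * σ w) - P (y - ε * w) - ε * σ w * h (y - ε * w))
    with hq
  set J : ℝ → ℝ := fun w => σ' w * ((h (y - ε * w + ε * σ w) - h (y - ε * w)) *
    (h (y - ε * w) * m (y - ε * w))) with hJ
  set K : ℝ → ℝ := fun w => q w * (h' (y - ε * w) * m (y - ε * w) + h (y - ε * w) * m' (y - ε * w))
    with hK
  have hDi : IntervalIntegrable D volume 0 π :=
    Continuous.intervalIntegrable (by fun_prop) _ _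
  have hKi : IntervalIntegrable K volume 0 π :=
    Continuous.intervalIntegrable (by fun_prop) _ _
  have hJi : IntervalIntegrable J volume 0 π :=
    hσi.mul_continuousOn (Continuous.continuousOn (by fun_prop))
  have ibp := intervalIntegral.integral_eq_sub_of_hasDerivAt_of_le pi_pos.le
    (f := fun w => q w * (h (y - ε * w) * m (y - ε * w)))
    (f' := fun w => ε * (J w - D w - K w)) (Continuous.continuousOn (by fun_prop)) ?_ ?_
  rotate_left
  · intro w hw
    have s1 := hσd w hw.1
    have x1 : HasDerivAt (fun w => y - ε * w) (-ε) w := by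
      simpa using ((hasDerivAt_id w).const_mul ε).const_sub y
    have x2 : HasDerivAt (fun w => y - ε * w + ε * σ w) (-ε + ε * σ' w) w :=
      x1.add (s1.const_mul ε)
    have h1 : HasDerivAt (fun w => h (y - ε * w)) (h' (y - ε * w) * (-ε)) w := (hd _).comp w x1
    have m1 : HasDerivAt (fun w => m (y - ε * w)) (m' (y - ε * w) * (-ε)) w := (hm _).comp w x1
    have p1 : HasDerivAt (fun w => P (y - ε * w)) (h (y - ε * w) * (-ε)) w := (hP _).comp w x1
    have p2 : HasDerivAt (fun w => P (y - ε * w + ε * σ w))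
      (h (y - ε * w + ε * σ w) * (-ε + ε * σ' w)) w := (hP _).comp w x2
    have := ((p2.sub p1).sub ((s1.const_mul ε).mul h1)).mul (h1.mul m1)
    refine this.congr_deriv ?_
    simp only [hJ, hD, hK, hq, Pi.sub_apply, Pi.mul_apply]
    ring
  · exact ((hJi.sub hDi).sub hKi).const_mul ε
  rw [intervalIntegral.integral_const_mul, intervalIntegral.integral_sub (hJi.sub hDi) hKi,
    intervalIntegral.integral_sub hJi hDi] at ibp
  have hkT : ∀ k : ℝ → ℝ, IntervalIntegrable k volume 0 π →
    IntervalIntegrable (fun w => k w * TT N ε (y - ε * w) (σ w)) volume 0 π := fun k hk =>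
      hk.mul_continuousOn (Continuous.continuousOn
        (hTc.comp (by fun_prop : Continuous fun w => (y - ε * w, σ w))))
  have i1 : IntervalIntegrable (fun w => B * R * σ w ^ 2) volume 0 π :=
    Continuous.intervalIntegrable (by fun_prop) _ _
  have i2 : IntervalIntegrable (fun w => R * (σ w * σ' w)) volume 0 π :=
    (hσi.continuousOn_mul hσc.continuousOn).const_mul R
  have bK : |∫ w in (0:ℝ)..π, K w| ≤ ∫ w in (0:ℝ)..π, B * R * σ w ^ 2 * TT N ε (y - ε * w) (σ w) := by
    rw [← Real.norm_eq_abs]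
    refine (intervalIntegral.norm_integral_le_integral_norm pi_pos.le).trans ?_
    exact intervalIntegral.integral_mono_on pi_pos.le hKi.norm (hkT _ i1)
      (fun w hw => hQF' _ w hw.1 hw.2)
  have bJ : |∫ w in (0:ℝ)..π, J w| ≤ ∫ w in (0:ℝ)..π, R * (σ w * σ' w) * TT N ε (y - ε * w) (σ w) := by
    rw [← Real.norm_eq_abs]
    refine (intervalIntegral.norm_integral_le_integral_norm pi_pos.le).trans ?_
    exact intervalIntegral.integral_mono_on pi_pos.le hJi.norm (hkT _ i2)
      (fun w hw => hIF _ w hw.1 hw.2)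
  have b1 : |q π * (h (y - ε * π) * m (y - ε * π))| ≤ _ := hQF (y - ε * π) π pi_pos.le le_rfl
  have b0 : |q 0 * (h (y - ε * 0) * m (y - ε * 0))| ≤ _ := hQF (y - ε * 0) 0 le_rfl pi_pos.le
  have hT0 : 0 ≤ TT N ε (y - ε * 0) (σ 0) := by
    unfold TT
    apply intervalIntegral.integral_nonneg zero_le_one
    intro r _
    have := hm0
    simp only [hN]
    have := hm0 (y - ε * 0 + ε * (r * σ 0))
    have := hm0 (y - ε * 0)
    positivity
  have b0' : R * σ 0 ^ 2 * TT N ε (y - ε * 0) (σ 0) ≤ R * σ π ^ 2 * TT N ε (y - ε * 0) (σ 0) := by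
    have := hσS 0 le_rfl pi_pos.le
    have := hσ0 0 le_rfl
    gcongr
  simp only [add_mul]
  rw [intervalIntegral.integral_add (hkT _ i1) (hkT _ i2)]
  have key : (∫ w in (0:ℝ)..π, D w) = (∫ w in (0:ℝ)..π, J w) - (∫ w in (0:ℝ)..π, K w)
      - ε * (q π * (h (y - ε * π) * m (y - ε * π)) - q 0 * (h (y - ε * 0) * m (y - ε * 0))) := by
    rw [← ibp]
    linear_combination (((∫ w in (0:ℝ)..π, J w) - (∫ w in (0:ℝ)..π, D w) - (∫ w in (0:ℝ)..π, K w))) * hε2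
  rw [key]
  have t1 : ∀ a b d : ℝ, |a - b - ε * d| ≤ |a| + |b| + |d| := by
    intro a b d
    have := abs_sub (a - b) (ε * d)
    rw [abs_mul, hε, one_mul] at this
    linarith [abs_sub a b]
  refine (t1 _ _ _).trans ?_
  have t2 := abs_sub (q π * (h (y - ε * π) * m (y - ε * π))) (q 0 * (h (y - ε * 0) * m (y - ε * 0)))
  have b2 := b0.trans b0'
  have hy : TT N ε (y - ε * 0) (σ 0) = TT N ε y (σ 0) := by rw [mul_zero, sub_zero]
  rw [hy] at b2
  linarith

lemma key_eps (p c R B G : ℝ) (hp : 1 ≤ p) (hc0 : 0 ≤ c) (hR : 1 ≤ R) (hB : 1 ≤ B)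
    (h h' m m' g : ℝ → ℝ) (hd : ∀ x, HasDerivAt h (h' x) x) (hc : Continuous h')
    (hm : ∀ x, HasDerivAt m (m' x) x) (hmc : Continuous m') (hm0 : ∀ x, 0 ≤ m x)
    (hmB : ∀ x, |m' x| ≤ B * m x)
    (hmR : ∀ x v, |v| ≤ c * π ^ (p - 1) → m x ≤ R * m (x + v))
    (hg : Continuous g) (hg0 : ∀ x, 0 ≤ g x) (hgG : ∀ x, g x ≤ G)
    (hper : Function.Periodic h (2 * π)) (hper' : Function.Periodic h' (2 * π))
    (hmper : Function.Periodic m (2 * π)) (hgper : Function.Periodic g (2 * π))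
    (ε : ℝ) (hε : |ε| = 1) :
    |∫ x in (-π)..π, ∫ w in (0:ℝ)..π, (h (x + ε * (c * w ^ (p - 1))) - h x
        - ε * (c * w ^ (p - 1)) * h' x) * (h x * m x) * g (x + ε * w)| ≤
      12 * G * R * B * (c * π ^ (p - 1)) ^ 2 * ∫ x in (-π)..π, (h' x ^ 2 + h x ^ 2) * m x := by
  have hhc : Continuous h := continuous_iff_continuousAt.2 fun x => (hd x).continuousAt
  have hmcc : Continuous m := continuous_iff_continuousAt.2 fun x => (hm x).continuousAt
  have hpp : -π ≤ π := by linarith [pi_pos]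
  have hG : 0 ≤ G := (hg0 0).trans (hgG 0)
  have py := per_y p c R B hp hc0 hR hB h h' m m' hd hc hm hmc hm0 hmB hmR ε hε
  set N : ℝ → ℝ := fun x => (h' x ^ 2 + h x ^ 2) * m x with hN
  have hNc : Continuous N := by fun_prop
  have hNper : Function.Periodic N (2 * π) := fun x => by
    simp only [hN, hper x, hper' x, hmper x]
  have hN0 : ∀ x, 0 ≤ N x := fun x => mul_nonneg (by positivity) (hm0 x)
  have hE : 0 ≤ ∫ x in (-π)..π, N x := intervalIntegral.integral_nonneg hpp fun x _ => hN0 x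
  have hTc := TT_cont N hNc ε
  have hTi := TT_int N hNc hNper ε
  set E := ∫ x in (-π)..π, N x with hEd
  set σ : ℝ → ℝ := fun w => c * w ^ (p - 1) with hσ
  set σ' : ℝ → ℝ := fun w => c * ((p - 1) * w ^ (p - 2)) with hσ'
  have hσc : Continuous σ := sig_cont p c hp
  have hσd : ∀ w, 0 < w → HasDerivAt σ (σ' w) w := fun w hw => sig_deriv p c w hw
  have hσi : IntervalIntegrable σ' volume 0 π := sig_int p c hp
  have hσ0 : ∀ w, 0 ≤ w → 0 ≤ σ w := fun w hw => by positivity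
  have hσS : ∀ w, 0 ≤ w → w ≤ π → σ w ≤ σ π := fun w h0 h1 => by
    have : 0 ≤ p - 1 := by linarith
    simp only [hσ]
    gcongr
  change ∀ y, |∫ w in (0:ℝ)..π, (h (y - ε * w + ε * σ w) - h (y - ε * w)
        - ε * σ w * h' (y - ε * w)) * (h (y - ε * w) * m (y - ε * w))| ≤
      R * (σ π) ^ 2 * (TT N ε (y - ε * π) (σ π) + TT N ε y (σ 0))
      + ∫ w in (0:ℝ)..π, (B * R * (σ w) ^ 2 + R * (σ w * σ' w)) * TT N ε (y - ε * w) (σ w) at py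
  change |∫ x in (-π)..π, ∫ w in (0:ℝ)..π, (h (x + ε * σ w) - h x
        - ε * σ w * h' x) * (h x * m x) * g (x + ε * w)| ≤ 12 * G * R * B * (σ π) ^ 2 * E
  set k : ℝ → ℝ := fun w => B * R * (σ w) ^ 2 + R * (σ w * σ' w) with hk
  have i1 : IntervalIntegrable (fun w => B * R * σ w ^ 2) volume 0 π :=
    Continuous.intervalIntegrable (by fun_prop) _ _
  have i2 : IntervalIntegrable (fun w => σ w * σ' w) volume 0 π :=
    hσi.continuousOn_mul hσc.continuousOn
  have hki : IntervalIntegrable k volume 0 π := i1.add (i2.const_mul R)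
  -- integral of k
  have ik : ∫ w in (0:ℝ)..π, k w ≤ B * R * σ π ^ 2 * π + R * (σ π ^ 2 / 2) := by
    simp only [hk]
    rw [intervalIntegral.integral_add i1 (i2.const_mul R), intervalIntegral.integral_const_mul R]
    have a1 : ∫ w in (0:ℝ)..π, B * R * σ w ^ 2 ≤ B * R * σ π ^ 2 * π := by
      have := intervalIntegral.integral_mono_on pi_pos.le i1
        (intervalIntegrable_const (c := B * R * σ π ^ 2)) (fun w hw => by
          have := hσS w hw.1 hw.2
          have := hσ0 w hw.1
          gcongr)
      refine this.trans (le_of_eq ?_)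
      simp; ring
    have a2 : ∫ w in (0:ℝ)..π, σ w * σ' w ≤ σ π ^ 2 / 2 := by
      have := intervalIntegral.integral_eq_sub_of_hasDerivAt_of_le pi_pos.le
        (f := fun w => σ w ^ 2 / 2) (f' := fun w => σ w * σ' w)
        (Continuous.continuousOn (by fun_prop)) (fun w hw => by
          refine (((hσd w hw.1).pow 2).div_const 2).congr_deriv ?_
          simp; ring) i2
      rw [this]
      linarith [sq_nonneg (σ 0)]
    gcongr
  -- swap, translate, swap
  have s1 := (swap_aux (-π) π 0 π hpp pi_pos.le (fun _ => 1) intervalIntegrable_const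
    (fun x w => (h (x + ε * σ w) - h x
        - ε * σ w * h' x) * (h x * m x) * g (x + ε * w)) (by fun_prop)).2
  have s2 := (swap_aux (-π) π 0 π hpp pi_pos.le (fun _ => 1) intervalIntegrable_const
    (fun y w => (h (y - ε * w + ε * σ w) - h (y - ε * w)
        - ε * σ w * h' (y - ε * w)) * (h (y - ε * w) * m (y - ε * w)) * g y) (by fun_prop))
  have s3 := swap_aux (-π) π 0 π hpp pi_pos.le k hki
    (fun y w => TT N ε (y - ε * w) (σ w))
    (hTc.comp (by fun_prop : Continuous fun z : ℝ × ℝ => (z.1 - ε * z.2, σ z.2)))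
  simp only [one_mul] at s1 s2
  rw [s1]
  have tr : ∀ w : ℝ, (∫ x in (-π)..π, (h (x + ε * σ w) - h x
        - ε * σ w * h' x) * (h x * m x) * g (x + ε * w)) =
      ∫ y in (-π)..π, (h (y - ε * w + ε * σ w) - h (y - ε * w)
        - ε * σ w * h' (y - ε * w)) * (h (y - ε * w) * m (y - ε * w)) * g y := by
    intro w
    have := per_shift (fun x => (h (x + ε * σ w) - h x
        - ε * σ w * h' x) * (h x * m x) * g (x + ε * w)) (fun x => by
      have e1 : x + 2 * π + ε * σ w = (x + ε * σ w) + 2 * π := by ring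
      have e2 : x + 2 * π + ε * w = (x + ε * w) + 2 * π := by ring
      simp only [e1, e2, hper _, hper' _, hmper _, hgper _]) (-(ε * w))
    rw [← this]
    simp only [← sub_eq_add_neg, sub_add_cancel]
  simp only [tr]
  rw [← s2.2]
  simp only [intervalIntegral.integral_mul_const]
  have hs21 := s2.1
  simp only [intervalIntegral.integral_mul_const] at hs21
  rw [← Real.norm_eq_abs]
  refine (intervalIntegral.norm_integral_le_integral_norm hpp).trans ?_
  have c1 : IntervalIntegrable (fun y => TT N ε (y - ε * π) (σ π)) volume (-π) π :=
    Continuous.intervalIntegrable (hTc.comp (by fun_prop : Continuous fun y => (y - ε * π, σ π))) _ _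
  have c2 : IntervalIntegrable (fun y => TT N ε y (σ 0)) volume (-π) π :=
    Continuous.intervalIntegrable (hTc.comp (by fun_prop : Continuous fun y => (y, σ 0))) _ _
  have mono := intervalIntegral.integral_mono_on hpp hs21.norm
    ((((c1.add c2).const_mul (R * σ π ^ 2)).add s3.1).const_mul G) (fun y _ => by
      rw [norm_mul, Real.norm_eq_abs, Real.norm_eq_abs, abs_of_nonneg (hg0 y), mul_comm]
      exact mul_le_mul (hgG y) (py y) (abs_nonneg _) hG)
  refine mono.trans ?_
  rw [intervalIntegral.integral_const_mul]
  rw [intervalIntegral.integral_add ((c1.add c2).const_mul (R * σ π ^ 2)) s3.1,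
    intervalIntegral.integral_const_mul, intervalIntegral.integral_add c1 c2, s3.2]
  have j1 : ∀ w, (∫ y in (-π)..π, TT N ε (y - ε * w) (σ w)) = 2 * E := fun w => by
    simpa only [sub_eq_add_neg] using hTi (-(ε * w)) (σ w)
  have j2 : (∫ y in (-π)..π, TT N ε y (σ 0)) = 2 * E := by simpa using hTi 0 (σ 0)
  simp only [j1, j2, intervalIntegral.integral_mul_const]
  have hS2 : 0 ≤ R * σ π ^ 2 * E := by positivity
  have hp4 : π ≤ 3.15 := pi_lt_d2.le
  have : (R * σ π ^ 2 * (2 * E + 2 * E) + (∫ w in (0:ℝ)..π, k w) * (2 * E)) ≤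
      12 * R * B * σ π ^ 2 * E := by
    have l1 := mul_le_mul_of_nonneg_right ik (by linarith : 0 ≤ 2 * E)
    have l2 : 0 ≤ (B - 1) * (R * σ π ^ 2 * E) := mul_nonneg (by linarith) hS2
    have l3 : 0 ≤ (3.15 - π) * (B * (R * σ π ^ 2 * E)) :=
      mul_nonneg (by linarith) (mul_nonneg (by linarith) hS2)
    nlinarith
  calc _ ≤ G * (12 * R * B * σ π ^ 2 * E) := mul_le_mul_of_nonneg_left this hG
    _ = _ := by ring

def UU (p : ℝ) (g : ℝ → ℝ) (x : ℝ) : ℝ := (2 * π)⁻¹ * ∫ w in (0:ℝ)..π, w ^ p * (g (x + w) + g (x - w))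
def VV (p : ℝ) (g : ℝ → ℝ) (x : ℝ) : ℝ :=
  -(p * (2 * π)⁻¹) * ∫ w in (0:ℝ)..π, w ^ (p - 1) * (g (x + w) - g (x - w))

lemma VV_cont (p : ℝ) (hp : 1 ≤ p) (g : ℝ → ℝ) (hg : Continuous g) : Continuous (VV p g) := by
  unfold VV
  have hs : Continuous (fun w : ℝ => w ^ (p - 1)) := Real.continuous_rpow_const (by linarith)
  apply continuous_const.mul
  apply intervalIntegral.continuous_parametric_intervalIntegral_of_continuous'
  have : Continuous (fun z : ℝ × ℝ => z.2 ^ (p - 1)) := hs.comp continuous_snd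
  simp only [Function.uncurry_def]
  fun_prop

lemma VV_bound (p : ℝ) (hp : 1 ≤ p) (g : ℝ → ℝ) (G : ℝ) (hg0 : ∀ x, 0 ≤ g x)
    (hgG : ∀ x, g x ≤ G) (x : ℝ) : |VV p g x| ≤ p * π ^ (p - 1) * G := by
  have hG : 0 ≤ G := (hg0 0).trans (hgG 0)
  have := intervalIntegral.norm_integral_le_of_norm_le_const (a := 0) (b := π)
    (f := fun w => w ^ (p - 1) * (g (x + w) - g (x - w))) (C := π ^ (p - 1) * G) (by
      intro w hw
      rw [uIoc_of_le pi_pos.le] at hw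
      rw [norm_mul, Real.norm_eq_abs, Real.norm_eq_abs, abs_of_nonneg (rpow_nonneg hw.1.le _)]
      have : 0 ≤ p - 1 := by linarith
      have h0 := hw.1.le
      have h1 := hw.2
      gcongr
      rw [abs_le]
      constructor <;> linarith [hg0 (x + w), hg0 (x - w), hgG (x + w), hgG (x - w)])
  rw [sub_zero, abs_of_pos pi_pos, Real.norm_eq_abs] at this
  unfold VV
  rw [abs_mul, abs_neg, abs_of_nonneg (by positivity)]
  calc _ ≤ p * (2 * π)⁻¹ * (π ^ (p - 1) * G * π) := by gcongr
    _ = p * π ^ (p - 1) * G / 2 := by field_simp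
    _ ≤ _ := half_le_self (by positivity)

lemma UU_deriv (p : ℝ) (hp : 1 ≤ p) (g : ℝ → ℝ) (G : ℝ) (hg : Continuous g) (hg0 : ∀ x, 0 ≤ g x)
    (hgG : ∀ x, g x ≤ G) (hper : Function.Periodic g (2 * π)) (x : ℝ) :
    HasDerivAt (UU p g) (VV p g x) x := by
  obtain ⟨Γ, hΓ⟩ : ∃ P : ℝ → ℝ, ∀ x, HasDerivAt P (g x) x :=
    ⟨fun x => ∫ t in (0:ℝ)..x, g t, fun x => hg.integral_hasStrictDerivAt 0 x |>.hasDerivAt⟩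
  have hΓc : Continuous Γ := continuous_iff_continuousAt.2 fun x => (hΓ x).continuousAt
  have hs : Continuous (fun w : ℝ => w ^ (p - 1)) := Real.continuous_rpow_const (by linarith)
  have hs1 : Continuous (fun w : ℝ => w ^ p) := Real.continuous_rpow_const (by linarith)
  have hadd : ∀ (w x : ℝ), HasDerivAt (fun x => Γ (x + w)) (g (x + w)) x := fun w x =>
    (hΓ _).comp_add_const x w
  have hsub : ∀ (w x : ℝ), HasDerivAt (fun x => Γ (x - w)) (g (x - w)) x := fun w x =>
    (hΓ _).comp_sub_const x w
  have e : UU p g = fun x => (2 * π)⁻¹ * (π ^ p * (Γ (x + π) - Γ (x - π))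
      - ∫ w in (0:ℝ)..π, p * w ^ (p - 1) * (Γ (x + w) - Γ (x - w))) := by
    ext x
    unfold UU
    congr 1
    have := intervalIntegral.integral_mul_deriv_eq_deriv_mul (a := 0) (b := π)
      (u := fun w => w ^ p) (u' := fun w => p * w ^ (p - 1))
      (v := fun w => Γ (x + w) - Γ (x - w)) (v' := fun w => g (x + w) + g (x - w))
      (fun w _ => Real.hasDerivAt_rpow_const (Or.inr hp))
      (fun w _ => by
        have h1 : HasDerivAt (fun w => Γ (x + w)) (g (x + w)) w := (hΓ _).comp_const_add x w
        have h2 : HasDerivAt (fun w => Γ (x - w)) (-g (x - w)) w := (hΓ _).comp_const_sub x w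
        refine (h1.sub h2).congr_deriv ?_
        ring)
      (Continuous.intervalIntegrable (by fun_prop) _ _)
      (Continuous.intervalIntegrable (by fun_prop) _ _)
    rw [this]
    simp
  rw [e]
  have hG : 0 ≤ G := (hg0 0).trans (hgG 0)
  have hI := (intervalIntegral.hasDerivAt_integral_of_dominated_loc_of_deriv_le (μ := volume)
    (a := 0) (b := π) (s := univ) (x₀ := x) (bound := fun w => p * π ^ (p - 1) * G)
    (F := fun x w => p * w ^ (p - 1) * (Γ (x + w) - Γ (x - w)))
    (F' := fun x w => p * w ^ (p - 1) * (g (x + w) - g (x - w)))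
    univ_mem (Eventually.of_forall fun x => Continuous.aestronglyMeasurable (by fun_prop))
    (Continuous.intervalIntegrable (by fun_prop) _ _)
    (Continuous.aestronglyMeasurable (by fun_prop))
    (Eventually.of_forall fun w hw x _ => by
      rw [uIoc_of_le pi_pos.le] at hw
      have h0 := hw.1.le
      have h1 := hw.2
      rw [norm_mul, Real.norm_eq_abs, Real.norm_eq_abs, abs_of_nonneg (by positivity)]
      have : 0 ≤ p - 1 := by linarith
      gcongr
      rw [abs_le]
      constructor <;> linarith [hg0 (x + w), hg0 (x - w), hgG (x + w), hgG (x - w)])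
    intervalIntegrable_const
    (Eventually.of_forall fun w hw x _ => ((hadd w x).sub (hsub w x)).const_mul _)).2
  refine (((((hadd π x).sub (hsub π x)).const_mul (π ^ p)).sub hI).const_mul ((2 * π)⁻¹)).congr_deriv ?_
  have : g (x + π) = g (x - π) := by
    have := hper (x - π)
    rw [← this]; congr 1; ring
  rw [this]
  unfold VV
  simp only [mul_assoc, intervalIntegral.integral_const_mul]
  ring

lemma UU_per (p : ℝ) (g : ℝ → ℝ) (hper : Function.Periodic g (2 * π)) :
    Function.Periodic (UU p g) (2 * π) := by
  intro x
  unfold UU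
  have e1 : ∀ w, g (x + 2 * π + w) = g (x + w) := fun w => by rw [← hper (x + w)]; congr 1; ring
  have e2 : ∀ w, g (x + 2 * π - w) = g (x - w) := fun w => by rw [← hper (x - w)]; congr 1; ring
  simp only [e1, e2]

def CC (p G : ℝ) : ℝ :=
  24 * G * exp (p * π ^ (p - 1) * G * (p / 2 * π ^ (p - 1))) * (1 + p * π ^ (p - 1) * G)
    * (p / 2 * π ^ (p - 1)) ^ 2

lemma core (p G α β K : ℝ) (hp : 1 ≤ p) (hα : 0 < α) (hβ : 1 ≤ β) (hαβ : α * β ^ 2 ≤ 1)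
    (hK : 0 ≤ K) (h h' h'' g : ℝ → ℝ) (hd : ∀ x, HasDerivAt h (h' x) x)
    (hd' : ∀ x, HasDerivAt h' (h'' x) x) (hc : Continuous h'')
    (hg : Continuous g) (hg0 : ∀ x, 0 ≤ g x) (hgG : ∀ x, g x ≤ G)
    (hper : Function.Periodic h (2 * π)) (hper' : Function.Periodic h' (2 * π))
    (hgper : Function.Periodic g (2 * π)) :
    (∫ x in (-π)..π, (1 / 2 * h'' x + α⁻¹ * ((2 * π)⁻¹ * ∫ w in (0:ℝ)..π,
        ((h (x + p / 2 * α * β * w ^ (p - 1)) - h x) * g (x + w)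
        + (h (x - p / 2 * α * β * w ^ (p - 1)) - h x) * g (x - w)))) * h x
          * (K * exp (-β * UU p g x)))
      ≤ -(1 / 2) * (∫ x in (-π)..π, h' x ^ 2 * (K * exp (-β * UU p g x)))
        + CC p G * α * β ^ 3 * ∫ x in (-π)..π, (h' x ^ 2 + h x ^ 2) * (K * exp (-β * UU p g x)) := by
  have hpp : -π ≤ π := by linarith [pi_pos]
  have hG : 0 ≤ G := (hg0 0).trans (hgG 0)
  have hhc : Continuous h := continuous_iff_continuousAt.2 fun x => (hd x).continuousAt
  have hhc' : Continuous h' := continuous_iff_continuousAt.2 fun x => (hd' x).continuousAt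
  have hVc := VV_cont p hp g hg
  have hVb := VV_bound p hp g G hg0 hgG
  have hUd := UU_deriv p hp g G hg hg0 hgG hgper
  have hUc : Continuous (UU p g) := continuous_iff_continuousAt.2 fun x => (hUd x).continuousAt
  have hUper := UU_per p g hgper
  set V0 := p * π ^ (p - 1) * G with hV0
  have hV00 : 0 ≤ V0 := by positivity
  set c := p / 2 * α * β with hcdef
  have hc0 : 0 ≤ c := by positivity
  set m : ℝ → ℝ := fun x => K * exp (-β * UU p g x) with hmdef
  set m' : ℝ → ℝ := fun x => -β * VV p g x * m x with hm'def
  have hmd : ∀ x, HasDerivAt m (m' x) x := by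
    intro x
    refine ((((hUd x).const_mul (-β)).exp).const_mul K).congr_deriv ?_
    simp only [hm'def, hmdef]; ring
  have hmc : Continuous m := by fun_prop
  have hm'c : Continuous m' := by fun_prop
  have hm0 : ∀ x, 0 ≤ m x := fun x => by positivity
  have hmper : Function.Periodic m (2 * π) := fun x => by simp only [hmdef, hUper x]
  have hmB : ∀ x, |m' x| ≤ (β * (1 + V0)) * m x := by
    intro x
    simp only [hm'def]
    rw [abs_mul, abs_mul, abs_neg, abs_of_nonneg (by linarith : 0 ≤ β), abs_of_nonneg (hm0 x)]
    have := hVb x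
    have := hm0 x
    gcongr
    linarith
  have hUlip : ∀ x v, |UU p g (x + v) - UU p g x| ≤ V0 * |v| := by
    intro x v
    have := Convex.norm_image_sub_le_of_norm_hasDerivWithin_le (s := univ) (f := UU p g)
      (f' := VV p g) (C := V0) (fun x _ => (hUd x).hasDerivWithinAt) (fun x _ => hVb x) convex_univ
      (mem_univ x) (mem_univ (x + v))
    simpa using this
  set R := exp (V0 * (p / 2 * π ^ (p - 1))) with hRdef
  have hR : 1 ≤ R := one_le_exp (by positivity)
  have hmR : ∀ x v, |v| ≤ c * π ^ (p - 1) → m x ≤ R * m (x + v) := by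
    intro x v hv
    simp only [hmdef]
    rw [hRdef, mul_left_comm, ← exp_add]
    gcongr
    have h1 := (abs_le.1 (hUlip x v)).2
    have h2 : β * (UU p g (x + v) - UU p g x) ≤ V0 * (p / 2 * π ^ (p - 1)) := by
      calc _ ≤ β * (V0 * |v|) := by gcongr
        _ ≤ β * (V0 * (c * π ^ (p - 1))) := by gcongr
        _ = V0 * (p / 2 * π ^ (p - 1)) * (α * β ^ 2) := by rw [hcdef]; ring
        _ ≤ V0 * (p / 2 * π ^ (p - 1)) * 1 := by gcongr
        _ = _ := by ring
    linarith
  have hB : 1 ≤ β * (1 + V0) := by nlinarith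
  have ke := key_eps p c R (β * (1 + V0)) G hp hc0 hR hB h h' m m' g hd hhc' hmd hm'c hm0 hmB hmR
    hg hg0 hgG hper hper' hmper hgper
  have k1 := ke 1 (by simp)
  have k2 := ke (-1) (by simp)
  simp only [one_mul, neg_mul, ← sub_eq_add_neg, sub_neg_eq_add] at k1 k2
  change (∫ x in (-π)..π, (1 / 2 * h'' x + α⁻¹ * ((2 * π)⁻¹ * ∫ w in (0:ℝ)..π,
        ((h (x + c * w ^ (p - 1)) - h x) * g (x + w)
        + (h (x - c * w ^ (p - 1)) - h x) * g (x - w)))) * h x * m x)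
      ≤ -(1 / 2) * (∫ x in (-π)..π, h' x ^ 2 * m x)
        + CC p G * α * β ^ 3 * ∫ x in (-π)..π, (h' x ^ 2 + h x ^ 2) * m x
  have hσc : Continuous (fun w : ℝ => w ^ (p - 1)) := Real.continuous_rpow_const (by linarith)
  have hσc2 : Continuous (fun z : ℝ × ℝ => z.2 ^ (p - 1)) := hσc.comp continuous_snd
  set I1 : ℝ → ℝ := fun x => ∫ w in (0:ℝ)..π, (h (x + c * w ^ (p - 1)) - h x
        - c * w ^ (p - 1) * h' x) * (h x * m x) * g (x + w) with hI1
  set I2 : ℝ → ℝ := fun x => ∫ w in (0:ℝ)..π, (h (x - c * w ^ (p - 1)) - h x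
        + c * w ^ (p - 1) * h' x) * (h x * m x) * g (x - w) with hI2
  have hI1c : Continuous I1 := by
    apply intervalIntegral.continuous_parametric_intervalIntegral_of_continuous'
    simp only [Function.uncurry_def]
    fun_prop
  have hI2c : Continuous I2 := by
    apply intervalIntegral.continuous_parametric_intervalIntegral_of_continuous'
    simp only [Function.uncurry_def]
    fun_prop
  -- pointwise identity
  have pt : ∀ x, (1 / 2 * h'' x + α⁻¹ * ((2 * π)⁻¹ * ∫ w in (0:ℝ)..π,
        ((h (x + c * w ^ (p - 1)) - h x) * g (x + w)
        + (h (x - c * w ^ (p - 1)) - h x) * g (x - w)))) * h x * m x =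
      1 / 2 * (h'' x * (h x * m x) + h' x * (h' x * m x + h x * m' x)) + -(1 / 2) * (h' x ^ 2 * m x)
        + α⁻¹ * (2 * π)⁻¹ * (I1 x + I2 x) := by
    intro x
    have a1 : I1 x + I2 x = h x * m x * (∫ w in (0:ℝ)..π,
        ((h (x + c * w ^ (p - 1)) - h x) * g (x + w)
        + (h (x - c * w ^ (p - 1)) - h x) * g (x - w)))
        - c * h' x * h x * m x * ∫ w in (0:ℝ)..π, w ^ (p - 1) * (g (x + w) - g (x - w)) := by
      simp only [hI1, hI2]
      rw [← intervalIntegral.integral_add (Continuous.intervalIntegrable (by fun_prop) _ _)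
        (Continuous.intervalIntegrable (by fun_prop) _ _),
        ← intervalIntegral.integral_const_mul, ← intervalIntegral.integral_const_mul,
        ← intervalIntegral.integral_sub (Continuous.intervalIntegrable (by fun_prop) _ _)
        (Continuous.intervalIntegrable (by fun_prop) _ _)]
      congr 1; ext w; ring
    rw [a1]
    simp only [hm'def, VV, hcdef]
    field_simp
    ring
  simp only [pt]
  have ibp : (∫ x in (-π)..π, (h'' x * (h x * m x) + h' x * (h' x * m x + h x * m' x))) = 0 := by
    rw [intervalIntegral.integral_eq_sub_of_hasDerivAt
      (f := fun x => h' x * (h x * m x)) (fun x _ => (hd' x).mul ((hd x).mul (hmd x)))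
      (Continuous.intervalIntegrable (by fun_prop) _ _)]
    have e1 := hper (-π)
    have e2 := hper' (-π)
    have e3 := hmper (-π)
    rw [show -π + 2 * π = π by ring] at e1 e2 e3
    rw [e1, e2, e3]; ring
  rw [intervalIntegral.integral_add (Continuous.intervalIntegrable (by fun_prop) _ _)
      (Continuous.intervalIntegrable (by fun_prop) _ _),
    intervalIntegral.integral_add (Continuous.intervalIntegrable (by fun_prop) _ _)
      (Continuous.intervalIntegrable (by fun_prop) _ _),
    intervalIntegral.integral_const_mul, intervalIntegral.integral_const_mul,
    intervalIntegral.integral_const_mul, ibp,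
    intervalIntegral.integral_add (Continuous.intervalIntegrable (by fun_prop) _ _)
      (Continuous.intervalIntegrable (by fun_prop) _ _)]
  set E := ∫ x in (-π)..π, (h' x ^ 2 + h x ^ 2) * m x with hE
  have hE0 : 0 ≤ E := intervalIntegral.integral_nonneg hpp fun x _ =>
    mul_nonneg (by positivity) (hm0 x)
  set W := 12 * G * R * (β * (1 + V0)) * (c * π ^ (p - 1)) ^ 2 * E with hW
  have hW0 : 0 ≤ W := by positivity
  have b1 : (∫ x in (-π)..π, I1 x) ≤ W := (abs_le.1 k1).2
  have b2 : (∫ x in (-π)..π, I2 x) ≤ W := (abs_le.1 k2).2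
  have hpi1 : (2 * π)⁻¹ ≤ 1 := inv_le_one_of_one_le₀ (by linarith [pi_gt_three])
  have fin : α⁻¹ * (2 * π)⁻¹ * ((∫ x in (-π)..π, I1 x) + ∫ x in (-π)..π, I2 x) ≤
      CC p G * α * β ^ 3 * E := by
    calc _ ≤ α⁻¹ * (2 * π)⁻¹ * (W + W) := by gcongr
      _ ≤ α⁻¹ * 1 * (W + W) := by gcongr
      _ = _ := by
        simp only [hW, CC, hcdef, ← hV0, ← hRdef]
        field_simp
        ring
  linarith

lemma rep_coe (x : ℝ) (h1 : -π < x) (h2 : x ≤ π) : rep (x : 𝕋) = x := by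
  unfold rep
  exact AddCircle.equivIoc_coe_of_mem ⟨h1, by linarith⟩

lemma int_lam (F : 𝕋 → ℝ) : (∫ z, F z ∂lam) = (2 * π)⁻¹ * ∫ x in (-π)..π, F (x : 𝕋) := by
  unfold lam
  have := AddCircle.intervalIntegral_preimage (2 * π) (-π) F
  rw [show -π + 2 * π = π by ring] at this
  rw [integral_smul_measure, this, ENNReal.toReal_inv, ENNReal.toReal_ofReal two_pi_pos.le,
    smul_eq_mul]

lemma int_lam_shift (F : 𝕋 → ℝ) (x : ℝ) :
    (∫ z, F z ∂lam) = (2 * π)⁻¹ * ∫ u in (-π)..π, F ((x + u : ℝ) : 𝕋) := by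
  rw [int_lam]
  congr 1
  have := per_shift (fun t => F (t : 𝕋)) (fun t => by
    simp only [AddCircle.coe_add_period]) x
  rw [← this]
  simp only [add_comm]

lemma int_dens (G : 𝕋 → ℝ) (hG : Continuous G) (h0 : ∀ x, 0 ≤ G x) (Φ : 𝕋 → ℝ) :
    (∫ z, Φ z ∂(lam.withDensity fun y => ENNReal.ofReal (G y))) = ∫ z, G z * Φ z ∂lam := by
  rw [integral_withDensity_eq_integral_toReal_smul (by fun_prop) (by simp)]
  simp only [ENNReal.toReal_ofReal (h0 _), smul_eq_mul]

lemma int_split (g : 𝕋 → ℝ) (hG : Continuous g) (h0 : ∀ x, 0 ≤ g x) (Φ : 𝕋 → ℝ) (x : ℝ)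
    (φ₁ φ₂ : ℝ → ℝ) (c1 : Continuous φ₁) (c2 : Continuous φ₂)
    (e1 : ∀ w ∈ Ioo (0:ℝ) π, Φ ((x + w : ℝ) : 𝕋) = φ₁ w)
    (e2 : ∀ w ∈ Ioo (0:ℝ) π, Φ ((x - w : ℝ) : 𝕋) = φ₂ w) :
    (∫ z, Φ z ∂(lam.withDensity fun y => ENNReal.ofReal (g y))) =
      (2 * π)⁻¹ * ∫ w in (0:ℝ)..π, (φ₁ w * g ((x + w : ℝ) : 𝕋) + φ₂ w * g ((x - w : ℝ) : 𝕋)) := by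
  rw [int_dens g hG h0, int_lam_shift _ x]
  congr 1
  have gc : Continuous (fun t : ℝ => g (t : 𝕋)) := hG.comp (AddCircle.continuous_mk' _)
  have gc1 : Continuous (fun w : ℝ => g ((x + w : ℝ) : 𝕋)) := gc.comp (by fun_prop : Continuous fun w => x + w)
  have gc2 : Continuous (fun w : ℝ => g ((x - w : ℝ) : 𝕋)) := gc.comp (by fun_prop : Continuous fun w => x - w)
  have i1 : IntervalIntegrable (fun w => φ₁ w * g ((x + w : ℝ) : 𝕋)) volume 0 π :=
    Continuous.intervalIntegrable (c1.mul gc1) _ _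
  have i2 : IntervalIntegrable (fun w => φ₂ w * g ((x - w : ℝ) : 𝕋)) volume 0 π :=
    Continuous.intervalIntegrable (c2.mul gc2) _ _
  have ae : ∀ᵐ w : ℝ ∂volume.restrict (uIoc 0 π), w ∈ Ioo (0:ℝ) π := by
    rw [uIoc_of_le pi_pos.le, ← restrict_Ioo_eq_restrict_Ioc]
    exact ae_restrict_mem measurableSet_Ioo
  have a1 : (fun w => φ₁ w * g ((x + w : ℝ) : 𝕋)) =ᵐ[volume.restrict (uIoc 0 π)]
      (fun w => g ((x + w : ℝ) : 𝕋) * Φ ((x + w : ℝ) : 𝕋)) := by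
    filter_upwards [ae] with w hw
    rw [e1 w hw, mul_comm]
  have a2 : (fun w => φ₂ w * g ((x - w : ℝ) : 𝕋)) =ᵐ[volume.restrict (uIoc 0 π)]
      (fun w => g ((x - w : ℝ) : 𝕋) * Φ ((x - w : ℝ) : 𝕋)) := by
    filter_upwards [ae] with w hw
    rw [e2 w hw, mul_comm]
  have j1 := i1.congr_ae a1
  have j2 := i2.congr_ae a2
  have j3 : IntervalIntegrable (fun w => g ((x + w : ℝ) : 𝕋) * Φ ((x + w : ℝ) : 𝕋)) volume (-π) 0 := by
    have := j2.comp_sub_left 0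
    simp only [zero_sub, sub_neg_eq_add, neg_zero, sub_zero] at this
    exact this.symm
  rw [← intervalIntegral.integral_add_adjacent_intervals j3 j1, intervalIntegral.integral_add i1 i2,
    add_comm, intervalIntegral.integral_congr_ae_restrict a1,
    intervalIntegral.integral_congr_ae_restrict a2]
  congr 1
  have := intervalIntegral.integral_comp_neg (a := 0) (b := π)
    (fun w => g ((x + w : ℝ) : 𝕋) * Φ ((x + w : ℝ) : 𝕋))
  simp only [← sub_eq_add_neg, neg_zero] at this
  exact this.symm

lemma dist_add' (x w : ℝ) (h0 : 0 ≤ w) (h1 : w ≤ π) :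
    dist (x : 𝕋) ((x + w : ℝ) : 𝕋) = w := by
  rw [dist_comm, dist_eq_norm, ← AddCircle.coe_sub, add_sub_cancel_left,
    (AddCircle.norm_coe_eq_abs_iff (2 * π) two_pi_pos.ne').2, abs_of_nonneg h0]
  rw [abs_of_nonneg h0, abs_of_pos two_pi_pos]; linarith

lemma dist_sub' (x w : ℝ) (h0 : 0 ≤ w) (h1 : w ≤ π) :
    dist (x : 𝕋) ((x - w : ℝ) : 𝕋) = w := by
  rw [dist_eq_norm, ← AddCircle.coe_sub, sub_sub_cancel,
    (AddCircle.norm_coe_eq_abs_iff (2 * π) two_pi_pos.ne').2, abs_of_nonneg h0]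
  rw [abs_of_nonneg h0, abs_of_pos two_pi_pos]; linarith

lemma sgn_add' (x w : ℝ) (h0 : 0 ≤ w) (h1 : w ≤ π) : sgn (x : 𝕋) ((x + w : ℝ) : 𝕋) = 1 := by
  unfold sgn
  rw [← AddCircle.coe_sub, add_sub_cancel_left, rep_coe w (by linarith [pi_pos]) h1, if_pos h0]

lemma sgn_sub' (x w : ℝ) (h0 : 0 < w) (h1 : w < π) : sgn (x : 𝕋) ((x - w : ℝ) : 𝕋) = -1 := by
  unfold sgn
  rw [← AddCircle.coe_sub, show x - w - x = -w by ring, rep_coe (-w) (by linarith) (by linarith),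
    if_neg (by linarith)]

lemma dist_le_pi (x y : 𝕋) : dist x y ≤ π := by
  rw [dist_eq_norm]
  have := AddCircle.norm_le_half_period (2 * π) (x := x - y) two_pi_pos.ne'
  rw [abs_of_pos two_pi_pos] at this
  linarith

lemma g_cont (g : 𝕋 → ℝ) (A a : ℝ) (ha : 0 < a)
    (hH : ∀ x y : 𝕋, |g x - g y| ≤ A * dist x y ^ a) : Continuous g := by
  rw [continuous_iff_continuousAt]
  intro x
  unfold ContinuousAt
  rw [tendsto_iff_dist_tendsto_zero]
  have h : Tendsto (fun y => A * dist y x ^ a) (nhds x) (nhds 0) := by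
    have : Continuous (fun y => A * dist y x ^ a) :=
      continuous_const.mul ((Real.continuous_rpow_const ha.le).comp (by fun_prop))
    simpa [Real.zero_rpow ha.ne'] using this.tendsto x
  exact squeeze_zero (fun y => dist_nonneg) (fun y => by rw [Real.dist_eq]; exact hH y x) h

instance : IsProbabilityMeasure lam := by
  constructor
  unfold lam
  rw [Measure.smul_apply, AddCircle.measure_univ, smul_eq_mul]
  exact ENNReal.inv_mul_cancel (by simp [pi_pos]) ENNReal.ofReal_ne_top

lemma g_bound (g : 𝕋 → ℝ) (A a : ℝ) (hA : 0 < A) (ha : 0 < a) (ha1 : a ≤ 1) (hg0 : ∀ x, 0 ≤ g x)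
    (hH : ∀ x y : 𝕋, |g x - g y| ≤ A * dist x y ^ a)
    (hν : IsProbabilityMeasure (lam.withDensity fun y => ENNReal.ofReal (g y))) (x : 𝕋) :
    g x ≤ 1 + A * π := by
  have hc := g_cont g A a ha hH
  have h1 := int_dens g hc hg0 (fun _ => 1)
  simp only [integral_const, probReal_univ, smul_eq_mul, mul_one] at h1
  have hint : Integrable g lam := by
    exact hc.integrable_of_hasCompactSupport (HasCompactSupport.of_compactSpace g)
  have hle : ∀ y, g x ≤ g y + A * π := by
    intro y
    have := (abs_le.1 (hH x y)).2
    have h2 : dist x y ^ a ≤ π := by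
      calc dist x y ^ a ≤ π ^ a := Real.rpow_le_rpow dist_nonneg (dist_le_pi x y) ha.le
        _ ≤ π ^ (1:ℝ) := Real.rpow_le_rpow_of_exponent_le (by linarith [pi_gt_three]) ha1
        _ = π := Real.rpow_one _
    nlinarith
  have := integral_mono (μ := lam) (integrable_const (g x)) (hint.add (integrable_const (A * π))) hle
  rw [integral_add' hint (integrable_const _)] at this
  simp only [integral_const, probReal_univ, smul_eq_mul, one_mul] at this
  linarith

/-- Lemma `Lffm`: for `p ≥ 1` and a Hölder density, there are constants
`σ̃ ∈ (0,1/2)` (depending only on `p`) and `c₃ > 0` (depending only on `p` and `A`) such that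
for `α > 0`, `β ≥ 1` with `αβ² ≤ σ̃` and any `C²` function `f` on the circle,
`∫ L_{α,β}[f-1](f-1) dμ_β
   ≤ -(1/2 - c₃ α^{ã(p)} β³) ∫ (f')² dμ_β + c₃ α^{ã(p)} β³ ∫ (f-1)² dμ_β`. -/
theorem dirichlet_form_perturbation_estimate (p : ℝ) (hp : 1 ≤ p) :
    ∃ σ' : ℝ, 0 < σ' ∧ σ' < 1 / 2 ∧
      ∀ (A : ℝ), 0 < A →
      ∃ c₃ : ℝ, 0 < c₃ ∧
        ∀ (a : ℝ), 0 < a → a ≤ 1 →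
        ∀ (g : 𝕋 → ℝ) (ν : Measure 𝕋), IsProbabilityMeasure ν →
          ν = lam.withDensity (fun y => ENNReal.ofReal (g y)) →
          (∀ x, 0 ≤ g x) →
          (∀ x y : 𝕋, |g x - g y| ≤ A * dist x y ^ a) →
        ∀ (α β : ℝ), 0 < α → 1 ≤ β → α * β ^ 2 ≤ σ' →
        ∀ f : ℝ → ℝ, Function.Periodic f (2 * π) → ContDiff ℝ 2 f →
          (∫ z, genp p ν α β (fun t => f t - 1) z * (f (rep z) - 1) ∂(gibbsp p ν β))
            ≤ -(1 / 2 - c₃ * α ^ ta p * β ^ 3) *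
                  (∫ z, (deriv f (rep z)) ^ 2 ∂(gibbsp p ν β))
                + c₃ * α ^ ta p * β ^ 3 *
                  ∫ z, (f (rep z) - 1) ^ 2 ∂(gibbsp p ν β) := by
  refine ⟨1 / 4, by norm_num, by norm_num, fun A hA => ⟨CC p (1 + A * π), ?_, ?_⟩⟩
  · unfold CC
    have := pi_pos
    positivity
  intro a ha ha1 g ν hν hνd hg0 hH α β hα hβ hαβ f hf hfc
  subst hνd
  have hpp : -π ≤ π := by linarith [pi_pos]
  have hgc := g_cont g A a ha hH
  have hgb := g_bound g A a hA ha ha1 hg0 hH hν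
  set ν := lam.withDensity (fun y => ENNReal.ofReal (g y)) with hνdef
  set gt : ℝ → ℝ := fun t => g (t : 𝕋) with hgt
  have hgtc : Continuous gt := hgc.comp (AddCircle.continuous_mk' _)
  have hgtper : Function.Periodic gt (2 * π) := fun t => by
    simp only [hgt, AddCircle.coe_add_period]
  have hσc : Continuous (fun w : ℝ => w ^ (p - 1)) := Real.continuous_rpow_const (by linarith)
  have hσc1 : Continuous (fun w : ℝ => w ^ p) := Real.continuous_rpow_const (by linarith)
  have hUp : ∀ x : ℝ, Up p ν (x : 𝕋) = UU p gt x := by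
    intro x
    unfold Up UU
    rw [hνdef, int_split g hgc hg0 (fun y => dist (x : 𝕋) y ^ p) x (fun w => w ^ p) (fun w => w ^ p)
      hσc1 hσc1 (fun w hw => by simp only [dist_add' x w hw.1.le hw.2.le])
      (fun w hw => by simp only [dist_sub' x w hw.1.le hw.2.le])]
    simp only [mul_add, hgt]
  have hUUc : Continuous (UU p gt) := continuous_iff_continuousAt.2 fun x =>
    (UU_deriv p hp gt (1 + A * π) hgtc (fun _ => hg0 _) (fun _ => hgb _) hgtper x).continuousAt
  have hUpc : Continuous (Up p ν) := by
    rw [(QuotientAddGroup.isQuotientMap_mk (N := AddSubgroup.zmultiples (2 * π))).continuous_iff]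
    exact hUUc.congr fun x => (hUp x).symm
  have hZ : 0 ≤ Zp p ν β := integral_nonneg fun x => (exp_pos _).le
  set K := (Zp p ν β)⁻¹ with hK
  have hgibbs : ∀ F : 𝕋 → ℝ, (∫ z, F z ∂(gibbsp p ν β)) =
      (2 * π)⁻¹ * ∫ x in (-π)..π, F (x : 𝕋) * (K * exp (-β * UU p gt x)) := by
    intro F
    unfold gibbsp
    rw [int_dens (fun x => Real.exp (-β * Up p ν x) / Zp p ν β) (by fun_prop)
      (fun x => by positivity), int_lam]
    congr 1
    congr 1; ext x
    rw [hUp, hK, div_eq_mul_inv]; ring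
  have hd : ∀ x, HasDerivAt (fun t => f t - 1) (deriv f x) x := fun x =>
    ((hfc.differentiable (by norm_num)) x).hasDerivAt.sub_const 1
  have hf1 : ContDiff ℝ 1 (deriv f) := by
    have : ContDiff ℝ (1 + 1) f := by simpa [one_add_one_eq_two] using hfc
    exact (contDiff_succ_iff_deriv.1 this).2.2
  have hd' : ∀ x, HasDerivAt (deriv f) (deriv (deriv f) x) x := fun x =>
    ((hf1.differentiable (by norm_num)) x).hasDerivAt
  have hc'' : Continuous (deriv (deriv f)) := hf1.continuous_deriv (by norm_num)
  have hper' : Function.Periodic (deriv f) (2 * π) := fun x => by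
    have h1 : HasDerivAt (fun t => f (t + 2 * π)) (deriv f (x + 2 * π)) x :=
      ((hfc.differentiable (by norm_num)) _).hasDerivAt.comp_add_const x (2 * π)
    have h2 : (fun t => f (t + 2 * π)) = f := funext hf
    rw [h2] at h1
    exact h1.deriv.symm
  have main := core p (1 + A * π) α β K hp hα hβ (by linarith) (by positivity)
    (fun t => f t - 1) (deriv f) (deriv (deriv f)) gt hd hd' hc'' hgtc (fun _ => hg0 _)
    (fun _ => hgb _) (fun x => by simp only [hf x]) hper' hgtper
  -- transfer
  have hfcont : Continuous f := hfc.continuous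
  have hrw : ∀ (F F' : ℝ → ℝ), (∀ x ∈ Ioc (-π) π, F x = F' x) →
      (∫ x in (-π)..π, F x) = ∫ x in (-π)..π, F' x := by
    intro F F' hFF
    apply intervalIntegral.integral_congr_ae
    rw [uIoc_of_le hpp]
    exact Eventually.of_forall hFF
  have L : (∫ z, genp p ν α β (fun t => f t - 1) z * (f (rep z) - 1) ∂(gibbsp p ν β)) =
      (2 * π)⁻¹ * ∫ x in (-π)..π, (1 / 2 * deriv (deriv f) x + α⁻¹ * ((2 * π)⁻¹ * ∫ w in (0:ℝ)..π,
        (((f (x + p / 2 * α * β * w ^ (p - 1)) - 1) - (f x - 1)) * gt (x + w)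
        + ((f (x - p / 2 * α * β * w ^ (p - 1)) - 1) - (f x - 1)) * gt (x - w)))) * (f x - 1)
          * (K * exp (-β * UU p gt x)) := by
    rw [hgibbs]
    congr 1
    apply hrw
    intro x hx
    congr 2
    · unfold genp
      rw [rep_coe x hx.1 hx.2]
      have dd : deriv (fun t => f t - 1) = deriv f := by ext t; simp
      rw [dd]
      congr 2
      rw [hνdef, int_split g hgc hg0 _ x
        (fun w => (f (x + p / 2 * α * β * w ^ (p - 1)) - 1) - (f x - 1))
        (fun w => (f (x - p / 2 * α * β * w ^ (p - 1)) - 1) - (f x - 1))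
        (by fun_prop) (by fun_prop)
        (fun w hw => by rw [dist_add' x w hw.1.le hw.2.le, sgn_add' x w hw.1.le hw.2.le, mul_one])
        (fun w hw => by
          rw [dist_sub' x w hw.1.le hw.2.le, sgn_sub' x w hw.1 hw.2, mul_neg_one, ← sub_eq_add_neg])]
    · rw [rep_coe x hx.1 hx.2]
  have X : (∫ z, (deriv f (rep z)) ^ 2 ∂(gibbsp p ν β)) =
      (2 * π)⁻¹ * ∫ x in (-π)..π, (deriv f x) ^ 2 * (K * exp (-β * UU p gt x)) := by
    rw [hgibbs]
    congr 1
    exact hrw _ _ fun x hx => by rw [rep_coe x hx.1 hx.2]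
  have Y : (∫ z, (f (rep z) - 1) ^ 2 ∂(gibbsp p ν β)) =
      (2 * π)⁻¹ * ∫ x in (-π)..π, (f x - 1) ^ 2 * (K * exp (-β * UU p gt x)) := by
    rw [hgibbs]
    congr 1
    exact hrw _ _ fun x hx => by rw [rep_coe x hx.1 hx.2]
  rw [L, X, Y]
  have hdc := hf1.continuous
  have split : (∫ x in (-π)..π, ((deriv f x) ^ 2 + (f x - 1) ^ 2) * (K * exp (-β * UU p gt x))) =
      (∫ x in (-π)..π, (deriv f x) ^ 2 * (K * exp (-β * UU p gt x)))
      + ∫ x in (-π)..π, (f x - 1) ^ 2 * (K * exp (-β * UU p gt x)) := by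
    rw [← intervalIntegral.integral_add (Continuous.intervalIntegrable (by fun_prop) _ _)
      (Continuous.intervalIntegrable (by fun_prop) _ _)]
    simp only [add_mul]
  rw [split] at main
  have hKp : 0 ≤ K := by positivity
  set x1 := ∫ x in (-π)..π, (deriv f x) ^ 2 * (K * exp (-β * UU p gt x)) with hx1
  set x2 := ∫ x in (-π)..π, (f x - 1) ^ 2 * (K * exp (-β * UU p gt x)) with hx2
  have x10 : 0 ≤ x1 := intervalIntegral.integral_nonneg hpp fun x _ => by positivity
  have x20 : 0 ≤ x2 := intervalIntegral.integral_nonneg hpp fun x _ => by positivity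
  have hα1 : α ≤ 1 := by nlinarith
  have hta : ta p ≤ 1 := by
    unfold ta
    split_ifs with h
    · exact le_rfl
    · push Not at h
      linarith [h.2]
  have hαt : α ≤ α ^ ta p := by
    calc α = α ^ (1:ℝ) := (Real.rpow_one α).symm
      _ ≤ _ := Real.rpow_le_rpow_of_exponent_ge hα hα1 hta
  have hCC : 0 ≤ CC p (1 + A * π) := by unfold CC; positivity
  have h3 : CC p (1 + A * π) * α * β ^ 3 * (x1 + x2) ≤
      CC p (1 + A * π) * α ^ ta p * β ^ 3 * (x1 + x2) := by gcongr
  have h4 := mul_le_mul_of_nonneg_left (main.trans (add_le_add_right h3 _))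
    (by positivity : 0 ≤ (2 * π)⁻¹)
  refine h4.trans (le_of_eq ?_)
  ring
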